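/- arXiv:1203.1653 — 5 statements merged into one kernel-verified Lean document; each statement's English description precedes it below -/
import Mathlib

section
/- Let 0 < q < ∞ and let f ∈ S(ℝ₊). Then for every v > 0, the distribution function of Φ_q(f) = f ⊗ φ_q on ℝ₊ × ℝ₊ satisfies d(v; Φ_q(f)) = ∫_{{s : |f(s)| ≤ v}} (|f(s)|/v)^q ds + d(v; f), as an equality in [0,∞]. Moreover, for φ_∞ = 1_{(0,1)} one has d(v; f ⊗ φ_∞) = d(v; f) for every v > 0. -/
/-! By Tonelli, the measure of a level set of `f ⊗ φ` is the integral over `s` of the measure of its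
slice `{t | v < |f s * φ t|}`. For `φ = φ_q` the slice is the interval `(0, min 1 ((|f s| / v) ^ q))`
(`slice_phiQ`), so its length is `(|f s| / v) ^ q` where `|f s| ≤ v` and `1` elsewhere; splitting
the integral along `{|f| ≤ v}` gives the first identity. For `φ_∞` the level set is
the product of `{|f| > v}` and `(0,1)`. -/

open MeasureTheory Set ENNReal

/-- Lebesgue measure on `ℝ₊ = (0,∞)`. -/
noncomputable def lebR : Measure ℝ := volume.restrict (Ioi (0:ℝ))

/-- Product Lebesgue measure on `ℝ₊ × ℝ₊`. -/
noncomputable def lebR2 : Measure (ℝ × ℝ) := lebR.prod lebR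

/-- `φ_q(t) = t^{-1/q}·1_{(0,1)}(t)`. -/
noncomputable def phiQ (q : ℝ) : ℝ → ℝ :=
  (Ioo (0:ℝ) 1).indicator (fun t => t ^ (-(1/q)))

/-- `φ_∞(t) = 1_{(0,1)}(t)`. -/
noncomputable def phiInf : ℝ → ℝ := (Ioo (0:ℝ) 1).indicator 1

instance : SFinite lebR := by unfold lebR; infer_instance

lemma lebR_Ioo (c : ℝ) : lebR (Ioo 0 c) = ENNReal.ofReal c := by
  rw [lebR, Measure.restrict_apply measurableSet_Ioo, inter_eq_left.2 fun x hx => hx.1,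
    Real.volume_Ioo, sub_zero]

lemma measurable_phiQ (q : ℝ) : Measurable (phiQ q) :=
  (measurable_id.pow_const _).indicator measurableSet_Ioo

/-- The slices of the level sets of `f ⊗ φ_q`; the interval is empty when `a = 0`. -/
lemma slice_phiQ {q v : ℝ} (hq : 0 < q) (hv : 0 < v) (a : ℝ) :
    {t | v < |a * phiQ q t|} = Ioo 0 (min 1 ((|a| / v) ^ q)) := by
  ext t
  by_cases ht : t ∈ Ioo (0:ℝ) 1
  · have hp : 0 < t ^ q⁻¹ := Real.rpow_pos_of_pos ht.1 _
    have h : |a * phiQ q t| = |a| / t ^ q⁻¹ := by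
      rw [phiQ, indicator_of_mem ht, one_div, Real.rpow_neg ht.1.le, abs_mul,
        abs_of_pos (inv_pos.2 hp), div_eq_mul_inv]
    rw [mem_ofPred_eq, h, lt_div_iff₀ hp, mul_comm, ← lt_div_iff₀ hv,
      Real.rpow_inv_lt_iff_of_pos ht.1.le (by positivity) hq, mem_Ioo, lt_min_iff]
    exact ⟨fun h => ⟨ht.1, ht.2, h⟩, fun h => h.2.2⟩
  · have h : phiQ q t = 0 := indicator_of_notMem ht _
    simp only [mem_ofPred_eq, h, mul_zero, abs_zero, hv.not_gt, false_iff, mem_Ioo, lt_min_iff]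
    exact fun h => ht ⟨h.1, h.2.1⟩

/-- The distribution function of `f ⊗ φ_∞`: the level set is a product with the factor `(0,1)`. -/
lemma dist_phiInf (f : ℝ → ℝ) {v : ℝ} (hv : 0 < v) :
    lebR2 {st : ℝ × ℝ | v < |f st.1 * phiInf st.2|} = lebR {s | v < |f s|} := by
  have h : {st : ℝ × ℝ | v < |f st.1 * phiInf st.2|} = {s | v < |f s|} ×ˢ Ioo (0:ℝ) 1 := by
    ext ⟨s, t⟩
    by_cases ht : t ∈ Ioo (0:ℝ) 1
    · simp [phiInf, ht]
    · simp only [mem_ofPred_eq, mem_prod, ht, and_false, iff_false, phiInf]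
      rw [indicator_of_notMem ht, mul_zero, abs_zero]
      exact hv.not_gt
  rw [h, lebR2, Measure.prod_prod, lebR_Ioo, ENNReal.ofReal_one, mul_one]

/-- for `0 < q < ∞` and `f ∈ S(ℝ₊)`, for every `v > 0`,
`d(v; Φ_q(f)) = ∫_{{|f| ≤ v}} (|f|/v)^q + d(v; f)`, and `d(v; f ⊗ φ_∞) = d(v; f)`. -/
theorem stmt0 (q : ℝ) (hq : 0 < q) (f : ℝ → ℝ) (hf : Measurable f)
    (hS : ∃ v > (0:ℝ), lebR {s | v < |f s|} < ∞) :
    ∀ v > (0:ℝ),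
      (lebR2 {st : ℝ × ℝ | v < |f st.1 * phiQ q st.2|}
        = (∫⁻ s in {s : ℝ | |f s| ≤ v}, ENNReal.ofReal ((|f s| / v) ^ q) ∂lebR)
          + lebR {s | v < |f s|})
      ∧ lebR2 {st : ℝ × ℝ | v < |f st.1 * phiInf st.2|} = lebR {s | v < |f s|} := by
  intro v hv
  refine ⟨?_, dist_phiInf f hv⟩
  have hfa : Measurable fun s => |f s| := hf.abs
  have hA : MeasurableSet {s | |f s| ≤ v} := measurableSet_le hfa measurable_const
  have hE : MeasurableSet {st : ℝ × ℝ | v < |f st.1 * phiQ q st.2|} :=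
    measurableSet_lt measurable_const
      ((hf.comp measurable_fst).mul ((measurable_phiQ q).comp measurable_snd)).abs
  have hslice (s : ℝ) : lebR (Prod.mk s ⁻¹' {st : ℝ × ℝ | v < |f st.1 * phiQ q st.2|})
      = ENNReal.ofReal (min 1 ((|f s| / v) ^ q)) := by
    rw [← lebR_Ioo, ← slice_phiQ hq hv]
    rfl
  have hc : {s | |f s| ≤ v}ᶜ = {s | v < |f s|} := by ext; simp
  rw [lebR2, Measure.prod_apply hE]
  simp_rw [hslice]
  rw [← lintegral_add_compl _ hA, hc]
  congr 1
  · refine setLIntegral_congr_fun hA fun s hs => ?_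
    have hs : |f s| ≤ v := hs
    rw [min_eq_right (Real.rpow_le_one (by positivity) ((div_le_one hv).2 hs) hq.le)]
  · rw [← setLIntegral_one]
    refine setLIntegral_congr_fun (hc ▸ hA.compl) fun s hs => ?_
    have hs : v < |f s| := hs
    rw [min_eq_left (Real.one_le_rpow ((one_le_div hv).2 hs.le) hq.le), ENNReal.ofReal_one]
end

section
/- Let 0 < p < ∞ and let f ∈ S(ℝ₊). If v > 0 is such that d(v; f) < ∞, then the distribution function of Ψ_p(f) = f ⊗ ψ_p on ℝ₊ × ℝ₊ satisfies d(v; Ψ_p(f)) = ∫_{{s : |f(s)| > v}} (|f(s)|/v)^p ds − d(v; f). -/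
/-!
By Tonelli, the measure of the superlevel set of `f ⊗ ψ_p` is the integral over `s` of the measure
of its vertical slices. The slice over `s` is exactly the interval `[1, (|f s| / v) ^ p)`, of length
`((|f s| / v) ^ p - 1)⁺`, which vanishes unless `|f s| > v`. Integrating over `{|f| > v}`, a set
of finite measure, the constant `1` splits off as `d(v; f)`.
-/

open MeasureTheory Set ENNReal

/-- `ψ_p(t) = t^{-1/p}·1_{[1,∞)}(t)`. -/
noncomputable def psiP (p : ℝ) : ℝ → ℝ :=
  (Ici (1:ℝ)).indicator (fun t => t ^ (-(1/p)))

/-- The slice is described without assuming `v < |y|`: otherwise both sides are empty. -/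
lemma slice_eq {p : ℝ} (hp : 0 < p) {v : ℝ} (hv : 0 < v) (y : ℝ) :
    {t : ℝ | v < |y * psiP p t|} = Ico 1 ((|y| / v) ^ p) := by
  ext t
  by_cases ht : 1 ≤ t
  · have ht0 : 0 < t := by linarith
    have hpos : 0 < t ^ (1 / p) := Real.rpow_pos_of_pos ht0 _
    have hpsi : psiP p t = (t ^ (1 / p))⁻¹ := by
      rw [psiP, indicator_of_mem (mem_Ici.2 ht), Real.rpow_neg ht0.le]
    have hroot : t ^ (1 / p) < |y| / v ↔ t < (|y| / v) ^ p := by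
      rw [← Real.rpow_lt_rpow_iff hpos.le (by positivity) hp, ← Real.rpow_mul ht0.le,
        one_div_mul_cancel hp.ne', Real.rpow_one]
    rw [mem_ofPred_eq, mem_Ico, hpsi, abs_mul, abs_of_pos (inv_pos.2 hpos), ← div_eq_mul_inv,
      lt_div_iff₀ hpos, ← hroot, lt_div_iff₀ hv, mul_comm]
    simp [ht]
  · have hpsi : psiP p t = 0 := indicator_of_notMem (by simpa using ht) _
    simp [hpsi, ht, hv.le]

lemma lebR_Ico_one (a : ℝ) : lebR (Ico 1 a) = ENNReal.ofReal a - 1 := by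
  have hsub : Ico 1 a ⊆ Ioi (0 : ℝ) := fun t ht => lt_of_lt_of_le one_pos ht.1
  rw [lebR, Measure.restrict_apply measurableSet_Ico, inter_eq_left.2 hsub, Real.volume_Ico,
    ENNReal.ofReal_sub _ zero_le_one, ENNReal.ofReal_one]

lemma measurable_psiP (p : ℝ) : Measurable (psiP p) :=
  (measurable_id.pow_const _).indicator measurableSet_Ici

/-- for `0 < p < ∞`, `f ∈ S(ℝ₊)` and `v > 0` with `d(v; f) < ∞`,
`d(v; Ψ_p(f)) = ∫_{{|f| > v}} (|f|/v)^p − d(v; f)`. -/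
theorem stmt1 (p : ℝ) (hp : 0 < p) (f : ℝ → ℝ) (hf : Measurable f)
    (hS : ∃ v > (0:ℝ), lebR {s | v < |f s|} < ∞)
    (v : ℝ) (hv : 0 < v) (hdv : lebR {s | v < |f s|} < ∞) :
    lebR2 {st : ℝ × ℝ | v < |f st.1 * psiP p st.2|}
      = (∫⁻ s in {s : ℝ | v < |f s|}, ENNReal.ofReal ((|f s| / v) ^ p) ∂lebR)
        - lebR {s | v < |f s|} := by
  have hA : MeasurableSet {s : ℝ | v < |f s|} := measurableSet_lt measurable_const hf.abs
  have hE : MeasurableSet {st : ℝ × ℝ | v < |f st.1 * psiP p st.2|} :=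
    measurableSet_lt measurable_const
      ((hf.comp measurable_fst).mul ((measurable_psiP p).comp measurable_snd)).abs
  have : SFinite lebR := by unfold lebR; infer_instance
  have hslice : ∀ s, lebR (Prod.mk s ⁻¹' {st : ℝ × ℝ | v < |f st.1 * psiP p st.2|})
      = {s : ℝ | v < |f s|}.indicator
          (fun s => ENNReal.ofReal ((|f s| / v) ^ p) - 1) s := by
    intro s
    have h1 : Prod.mk s ⁻¹' {st : ℝ × ℝ | v < |f st.1 * psiP p st.2|}
        = {t : ℝ | v < |f s * psiP p t|} := rfl
    rw [h1, slice_eq hp hv, lebR_Ico_one]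
    by_cases hs : v < |f s|
    · rw [indicator_of_mem (show s ∈ {s : ℝ | v < |f s|} from hs)]
    · rw [indicator_of_notMem (show s ∉ {s : ℝ | v < |f s|} from hs)]
      refine tsub_eq_zero_of_le (ENNReal.ofReal_le_one.2 (Real.rpow_le_one (by positivity) ?_ hp.le))
      exact (div_le_one hv).2 (not_lt.1 hs)
  rw [lebR2, Measure.prod_apply hE, lintegral_congr hslice, lintegral_indicator hA]
  have hone : ∫⁻ _ in {s : ℝ | v < |f s|}, (1 : ℝ≥0∞) ∂lebR = lebR {s | v < |f s|} := by
    rw [lintegral_const, one_mul, Measure.restrict_apply_univ]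
  rw [lintegral_sub measurable_const (by rw [hone]; exact hdv.ne) ?_, hone]
  filter_upwards [ae_restrict_mem hA] with s hs
  have hs' : v < |f s| := hs
  exact ENNReal.one_le_ofReal.2 (Real.one_le_rpow ((one_le_div hv).2 hs'.le) hp.le)
end

section
/- Let 0 < p, q < ∞ and let f ∈ S(ℝ₊). Then for every v > 0, the distribution function of Θ_{p,q}(f) = f ⊗ θ_{p,q} on ℝ₊ × ℝ₊ satisfies d(v; Θ_{p,q}(f)) = ∫_{{s : |f(s)| > v}} (|f(s)|/v)^p ds + ∫_{{s : |f(s)| ≤ v}} (|f(s)|/v)^q ds, as an equality in [0,∞] (in particular both sides are simultaneously infinite). -/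
/-!
The proof computes the sections of the superlevel set and applies Tonelli.

Fix `s` and put `r = |f s| / v`. For `t > 0`, the inequality `v < |f s| θ(t)` reads `1 < r θ(t)`.
If `r > 1`, it holds for all `t < 1` (where `θ ≥ 1`), and for `t ≥ 1` it says `t < r ^ p`; if
`r ≤ 1`, it fails for all `t ≥ 1` (where `θ ≤ 1`), and for `t < 1` it says `t < r ^ q`. Hence the
section is the interval `(0, r ^ p)` or `(0, r ^ q)` (`lt_mul_thetaPQ_iff`), whose length is the
integrand on the right.
-/

open MeasureTheory Set ENNReal

/-- `θ_{p,q}(t) = t^{-1/q}·1_{(0,1)}(t) + t^{-1/p}·1_{[1,∞)}(t)`. -/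
noncomputable def thetaPQ (p q : ℝ) : ℝ → ℝ := fun t =>
  (Ioo (0:ℝ) 1).indicator (fun t => t ^ (-(1/q))) t
    + (Ici (1:ℝ)).indicator (fun t => t ^ (-(1/p))) t

lemma thetaPQ_of_lt_one (p q : ℝ) {t : ℝ} (h0 : 0 < t) (h1 : t < 1) :
    thetaPQ p q t = t ^ (-(1/q)) := by
  simp [thetaPQ, indicator, h0, h1, h1.not_ge]

lemma thetaPQ_of_one_le (p q : ℝ) {t : ℝ} (h1 : 1 ≤ t) :
    thetaPQ p q t = t ^ (-(1/p)) := by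
  simp [thetaPQ, indicator, h1, h1.not_gt]

lemma measurable_thetaPQ (p q : ℝ) : Measurable (thetaPQ p q) := by
  unfold thetaPQ
  exact ((measurable_id.pow_const _).indicator measurableSet_Ioo).add
    ((measurable_id.pow_const _).indicator measurableSet_Ici)

/-- The decreasing power function `t ^ (-1/a)` is inverted explicitly on `(0, ∞)`. -/
lemma one_lt_mul_rpow_iff {a r t : ℝ} (ha : 0 < a) (hr : 0 ≤ r) (ht : 0 < t) :
    1 < r * t ^ (-(1/a)) ↔ t < r ^ a := by
  have hpos : 0 < t ^ (1/a) := Real.rpow_pos_of_pos ht _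
  rw [Real.rpow_neg ht.le, ← div_eq_mul_inv, one_lt_div hpos, one_div,
    Real.rpow_inv_lt_iff_of_pos ht.le hr ha]

lemma one_lt_mul_thetaPQ_iff {p q r t : ℝ} (hp : 0 < p) (hq : 0 < q) (hr : 0 ≤ r) (ht : 0 < t) :
    1 < r * thetaPQ p q t ↔ t < if 1 < r then r ^ p else r ^ q := by
  rcases lt_or_ge t 1 with h1 | h1
  · rw [thetaPQ_of_lt_one p q ht h1, one_lt_mul_rpow_iff hq hr ht]
    split_ifs with h
    · exact iff_of_true (h1.trans (Real.one_lt_rpow h hq)) (h1.trans (Real.one_lt_rpow h hp))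
    · rfl
  · rw [thetaPQ_of_one_le p q h1, one_lt_mul_rpow_iff hp hr ht]
    split_ifs with h
    · rfl
    · exact iff_of_false (((Real.rpow_le_one hr (not_lt.mp h) hp.le).trans h1).not_gt)
        (((Real.rpow_le_one hr (not_lt.mp h) hq.le).trans h1).not_gt)

/-- On `(0, ∞)` the section of the superlevel set at a point where `f` has the value `y` is an
initial interval; its endpoint is `(|y| / v) ^ p` or `(|y| / v) ^ q`. -/
lemma lt_mul_thetaPQ_iff {p q v t : ℝ} (y : ℝ) (hp : 0 < p) (hq : 0 < q) (hv : 0 < v)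
    (ht : 0 < t) :
    v < |y * thetaPQ p q t| ↔ t < if v < |y| then (|y| / v) ^ p else (|y| / v) ^ q := by
  have hθ : 0 ≤ thetaPQ p q t := by
    rcases lt_or_ge t 1 with h1 | h1
    · rw [thetaPQ_of_lt_one p q ht h1]; positivity
    · rw [thetaPQ_of_one_le p q h1]; positivity
  have h := one_lt_mul_thetaPQ_iff hp hq (r := |y| / v) (by positivity) ht
  simp only [div_mul_eq_mul_div, one_lt_div hv] at h
  rw [abs_mul, abs_of_nonneg hθ, h]

lemma lebR_section {p q v : ℝ} (y : ℝ) (hp : 0 < p) (hq : 0 < q) (hv : 0 < v) :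
    lebR {t | v < |y * thetaPQ p q t|}
      = ENNReal.ofReal (if v < |y| then (|y| / v) ^ p else (|y| / v) ^ q) := by
  have hm : MeasurableSet {t | v < |y * thetaPQ p q t|} :=
    measurableSet_lt measurable_const (measurable_const.mul (measurable_thetaPQ p q)).abs
  have hset : {t | v < |y * thetaPQ p q t|} ∩ Ioi 0
      = Ioo 0 (if v < |y| then (|y| / v) ^ p else (|y| / v) ^ q) := by
    ext t
    simp only [mem_inter_iff, mem_ofPred_eq, mem_Ioi, mem_Ioo]
    rw [and_comm]
    exact and_congr_right fun ht => lt_mul_thetaPQ_iff y hp hq hv ht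
  rw [lebR, Measure.restrict_apply hm, hset, Real.volume_Ioo, sub_zero]

/-- for `0 < p, q < ∞`, `f ∈ S(ℝ₊)` and every `v > 0`,
`d(v; Θ_{p,q}(f)) = ∫_{{|f| > v}} (|f|/v)^p + ∫_{{|f| ≤ v}} (|f|/v)^q` in `[0,∞]`. -/
theorem stmt2 (p q : ℝ) (hp : 0 < p) (hq : 0 < q) (f : ℝ → ℝ) (hf : Measurable f)
    (hS : ∃ v > (0:ℝ), lebR {s | v < |f s|} < ∞) :
    ∀ v > (0:ℝ),
      lebR2 {st : ℝ × ℝ | v < |f st.1 * thetaPQ p q st.2|}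
        = (∫⁻ s in {s : ℝ | v < |f s|}, ENNReal.ofReal ((|f s| / v) ^ p) ∂lebR)
          + ∫⁻ s in {s : ℝ | |f s| ≤ v}, ENNReal.ofReal ((|f s| / v) ^ q) ∂lebR := by
  intro v hv
  have : SFinite lebR := by unfold lebR; infer_instance
  have hm : MeasurableSet {st : ℝ × ℝ | v < |f st.1 * thetaPQ p q st.2|} :=
    measurableSet_lt measurable_const
      ((hf.comp measurable_fst).mul ((measurable_thetaPQ p q).comp measurable_snd)).abs
  have hA : MeasurableSet {s : ℝ | v < |f s|} := measurableSet_lt measurable_const hf.abs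
  have hAc : {s : ℝ | v < |f s|}ᶜ = {s : ℝ | |f s| ≤ v} := by ext s; simp
  rw [lebR2, Measure.prod_apply hm]
  simp only [preimage_ofPred_eq, lebR_section _ hp hq hv]
  rw [← lintegral_add_compl _ hA, hAc]
  congr 1
  · exact setLIntegral_congr_fun hA fun s hs => by simp only [if_pos (mem_ofPred_eq ▸ hs)]
  · exact setLIntegral_congr_fun (hAc ▸ hA.compl) fun s hs => by
      simp only [if_neg (not_lt.mpr (mem_ofPred_eq ▸ hs))]
end

section
/- Let 0 < p < ∞ and let f ∈ S(ℝ₊). Then for every v > 0, the distribution function of Θ_{p,∞}(f) = f ⊗ θ_{p,∞} on ℝ₊ × ℝ₊ satisfies d(v; Θ_{p,∞}(f)) = ∫_{{s : |f(s)| > v}} (|f(s)|/v)^p ds, as an equality in [0,∞]. -/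
/-!
By Tonelli, the measure of `{|f ⊗ θ| > v}` is the integral over `s` of the measure of its slice
`{t > 0 : |f s| θ(t) > v}`. Since `θ ≤ 1`, the slice is empty when `|f s| ≤ v`; when `|f s| > v` it
is the interval `(0, (|f s|/v)^p)`, because `θ(t) = t^{-1/p}` for `t ≥ 1` and `(|f s|/v)^p > 1`
(`lebR_slice`).
-/

open MeasureTheory Set ENNReal

/-- `θ_{p,∞}(t) = 1_{(0,1)}(t) + t^{-1/p}·1_{[1,∞)}(t)`. -/
noncomputable def thetaPInf (p : ℝ) : ℝ → ℝ := fun t =>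
  (Ioo (0:ℝ) 1).indicator 1 t + (Ici (1:ℝ)).indicator (fun t => t ^ (-(1/p))) t

theorem thetaPInf_of_lt_one {p t : ℝ} (h0 : 0 < t) (h1 : t < 1) : thetaPInf p t = 1 := by
  simp [thetaPInf, h0, h1]

theorem thetaPInf_of_one_le {p t : ℝ} (h1 : 1 ≤ t) : thetaPInf p t = t ^ (-(1/p)) := by
  simp [thetaPInf, h1]

theorem measurable_thetaPInf (p : ℝ) : Measurable (thetaPInf p) :=
  (measurable_one.indicator measurableSet_Ioo).add
    ((measurable_id.pow_const _).indicator measurableSet_Ici)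

theorem thetaPInf_nonneg {p t : ℝ} (h0 : 0 < t) : 0 ≤ thetaPInf p t := by
  rcases lt_or_ge t 1 with h | h
  · rw [thetaPInf_of_lt_one h0 h]; exact zero_le_one
  · rw [thetaPInf_of_one_le h]; positivity

theorem thetaPInf_le_one {p t : ℝ} (hp : 0 < p) (h0 : 0 < t) : thetaPInf p t ≤ 1 := by
  rcases lt_or_ge t 1 with h | h
  · rw [thetaPInf_of_lt_one h0 h]
  · rw [thetaPInf_of_one_le h]
    exact Real.rpow_le_one_of_one_le_of_nonpos h (by simp [hp.le])

theorem lt_mul_thetaPInf_iff {p v a t : ℝ} (hp : 0 < p) (hv : 0 < v) (ha : v < a) (h0 : 0 < t) :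
    v < a * thetaPInf p t ↔ t < (a / v) ^ p := by
  have hav : 1 < a / v := (one_lt_div hv).2 ha
  rcases lt_or_ge t 1 with h | h
  · rw [thetaPInf_of_lt_one h0 h, mul_one]
    exact iff_of_true ha (h.trans (Real.one_lt_rpow hav hp))
  · have ht : 0 < t ^ (1 / p) := Real.rpow_pos_of_pos h0 _
    rw [thetaPInf_of_one_le h, Real.rpow_neg h0.le, ← div_eq_mul_inv, lt_div_iff₀ ht,
      mul_comm, ← lt_div_iff₀ hv, one_div,
      Real.rpow_inv_lt_iff_of_pos h0.le (zero_le_one.trans hav.le) hp]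

/-- The slice of the superlevel set of `f ⊗ θ` over a point where `f` takes the value `a`
has measure `(|a|/v)^p` if `|a| > v`, and measure zero otherwise. -/
theorem lebR_slice {p v : ℝ} (hp : 0 < p) (hv : 0 < v) (a : ℝ) :
    lebR {t | v < |a * thetaPInf p t|} =
      if v < |a| then ENNReal.ofReal ((|a| / v) ^ p) else 0 := by
  have habs : ∀ t : ℝ, 0 < t → |a * thetaPInf p t| = |a| * thetaPInf p t := fun t h0 => by
    rw [abs_mul, abs_of_nonneg (thetaPInf_nonneg h0)]
  rw [lebR, Measure.restrict_apply' measurableSet_Ioi]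
  split_ifs with ha
  · have : {t | v < |a * thetaPInf p t|} ∩ Ioi (0:ℝ) = Ioo 0 ((|a| / v) ^ p) := by
      ext t
      simp only [mem_inter_iff, mem_ofPred_eq, mem_Ioi, mem_Ioo]
      rw [and_comm, and_congr_right_iff]
      intro h0
      rw [habs t h0, lt_mul_thetaPInf_iff hp hv ha h0]
    rw [this, Real.volume_Ioo, sub_zero]
  · have : {t | v < |a * thetaPInf p t|} ∩ Ioi (0:ℝ) = ∅ := by
      ext t
      simp only [mem_inter_iff, mem_ofPred_eq, mem_Ioi, mem_empty_iff_false, iff_false, not_and']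
      intro h0
      rw [habs t h0, not_lt]
      exact (mul_le_of_le_one_right (abs_nonneg a) (thetaPInf_le_one hp h0)).trans (not_lt.1 ha)
    rw [this, measure_empty]

/-- for `0 < p < ∞`, `f ∈ S(ℝ₊)` and every `v > 0`,
`d(v; Θ_{p,∞}(f)) = ∫_{{|f| > v}} (|f|/v)^p` in `[0,∞]`. -/
theorem stmt3 (p : ℝ) (hp : 0 < p) (f : ℝ → ℝ) (hf : Measurable f)
    (hS : ∃ v > (0:ℝ), lebR {s | v < |f s|} < ∞) :
    ∀ v > (0:ℝ),
      lebR2 {st : ℝ × ℝ | v < |f st.1 * thetaPInf p st.2|}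
        = ∫⁻ s in {s : ℝ | v < |f s|}, ENNReal.ofReal ((|f s| / v) ^ p) ∂lebR := by
  intro v hv
  have : SFinite lebR := by unfold lebR; infer_instance
  have hset : MeasurableSet {st : ℝ × ℝ | v < |f st.1 * thetaPInf p st.2|} :=
    measurableSet_lt measurable_const
      (((hf.comp measurable_fst).mul ((measurable_thetaPInf p).comp measurable_snd)).abs)
  have hlev : MeasurableSet {s : ℝ | v < |f s|} := measurableSet_lt measurable_const hf.abs
  rw [lebR2, Measure.prod_apply hset, ← lintegral_indicator hlev]
  refine lintegral_congr fun s => ?_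
  simp only [preimage_ofPred_eq, lebR_slice hp hv, indicator_apply, mem_ofPred_eq]
end

section
/- Let 0 < p < q < ∞ and let Φ : [0,∞) → [0,∞) be an increasing differentiable function with Φ(0) = 0 satisfying: (i) the global Δ₂-condition Φ(2t) ≤ C₁Φ(t) for all t ≥ 0; (ii) sup_{t>0} tΦ′(t)/Φ(t) < ∞; (iii) ∫_0^t s^{−p}Φ(s) ds/s ≤ C₂ t^{−p}Φ(t) for all t > 0; (iv) ∫_t^∞ s^{−q}Φ(s) ds/s ≤ C₃ t^{−q}Φ(t) for all t > 0. Let α > 0, let f be a nonnegative measurable function on ℝ₊ and let g be a measurable function on ℝ₊ such that d(αv; g) ≤ d(v; Θ_{p,q}(f)) for all v > 0. Then ∫_0^∞ Φ(|g(t)|) dt ≤ K ∫_0^∞ Φ(f(t)) dt, where K is a constant depending only on Φ (i.e. on C₁, C₂, C₃ and the supremum in (ii)), p, q and α. -/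
/-!
By iterating the `Δ₂`-condition it suffices to bound `∫ Φ(|g|/α)`. Since `Φ(|·|)` is continuous and
increasing in `|·|`, the layer-cake formula turns the inequality between distribution functions into
`∫ Φ(|g|/α) ≤ ∬ Φ(f(s)θ(t)) dt ds` (`lintegral_le_of_distribution_le`). For fixed `a = f(s) > 0` the
substitution `u = aθ(t)` gives
`∫ Φ(aθ(t)) dt = q a^q ∫_a^∞ u^{-q}Φ(u) du/u + p a^p ∫_0^a u^{-p}Φ(u) du/u`,
and the two integral conditions bound this by `(q C₃ + p C₂) Φ(a)` (`lintegral_theta_le`).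
The integral condition at `0` also forces `Φ(0+) = 0`, hence continuity at `0`
(`continuous_comp_abs`).
-/

open MeasureTheory Set ENNReal

/-- A function on `[0,∞)` that is increasing, differentiable on `(0,∞)` and null at `0` is continuous
on `[0,∞)` as soon as `s^{-p-1}Φ(s)` is integrable near `0`: a positive limit at `0⁺` would make the
integral dominate the divergent integral of `s^{-p-1}`. -/
lemma continuous_comp_abs (p : ℝ) (hp : 0 < p)
    (Φ Φ' : ℝ → ℝ) (hΦmono : MonotoneOn Φ (Ici (0:ℝ))) (hΦ0 : Φ 0 = 0)
    (hΦderiv : ∀ t > (0:ℝ), HasDerivAt Φ (Φ' t) t)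
    (hfin : (∫⁻ s in Ioo (0:ℝ) 1, ENNReal.ofReal (s ^ (-p) * Φ s / s) ∂volume) ≠ ∞) :
    Continuous (fun x : ℝ => Φ |x|) := by
  have hsmall : ∀ c > 0, ∃ s > 0, Φ s < c := by
    intro c hc
    by_contra! hcon
    apply (show ¬ IntegrableOn (fun x : ℝ => x ^ (-p - 1)) (Ioo (0:ℝ) 1) by
      rw [intervalIntegral.integrableOn_Ioo_rpow_iff one_pos]; linarith)
    refine ⟨by fun_prop, ?_⟩
    have hle : (∫⁻ s in Ioo (0:ℝ) 1, ENNReal.ofReal c * ENNReal.ofReal (s ^ (-p - 1)))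
        ≤ ∫⁻ s in Ioo (0:ℝ) 1, ENNReal.ofReal (s ^ (-p) * Φ s / s) := by
      refine setLIntegral_mono' measurableSet_Ioo fun s hs => ?_
      rw [← ENNReal.ofReal_mul hc.le]
      refine ENNReal.ofReal_le_ofReal ?_
      rw [Real.rpow_sub_one hs.1.ne', mul_div_assoc', mul_comm c]
      have := hcon s hs.1
      have := hs.1
      have : 0 ≤ s ^ (-p) := by positivity
      gcongr
    rw [lintegral_const_mul _ (by fun_prop)] at hle
    have hlt := (hle.trans_lt hfin.lt_top)
    rw [hasFiniteIntegral_iff_norm]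
    have heq : (∫⁻ s in Ioo (0:ℝ) 1, ENNReal.ofReal ‖s ^ (-p - 1)‖)
        = ∫⁻ s in Ioo (0:ℝ) 1, ENNReal.ofReal (s ^ (-p - 1)) := by
      refine setLIntegral_congr_fun measurableSet_Ioo fun s hs => ?_
      have := hs.1
      rw [Real.norm_of_nonneg (by positivity)]
    rw [heq]
    rcases ENNReal.mul_lt_top_iff.1 hlt with h | h | h
    · exact h.2
    · exact absurd (ENNReal.ofReal_eq_zero.1 h) (by linarith)
    · simp [h]
  rw [continuous_iff_continuousAt]
  intro x
  rcases eq_or_ne x 0 with rfl | hx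
  · rw [Metric.continuousAt_iff]
    intro ε hε
    obtain ⟨s, hs, hsε⟩ := hsmall ε hε
    refine ⟨s, hs, fun {y} hy => ?_⟩
    have hy' : |y| < s := by simpa [Real.dist_eq] using hy
    have h1 : Φ |y| ≤ Φ s := hΦmono (abs_nonneg y) hs.le hy'.le
    have h2 : Φ 0 ≤ Φ |y| := hΦmono self_mem_Ici (abs_nonneg y) (abs_nonneg y)
    rw [hΦ0] at h2
    simp only [Real.dist_eq, abs_zero, hΦ0, sub_zero, abs_of_nonneg h2]
    linarith
  · exact ContinuousAt.comp (g := Φ) (f := fun x : ℝ => |x|)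
      (hΦderiv _ (abs_pos.2 hx)).continuousAt continuous_abs.continuousAt

/-- Domination of distribution functions passes to `Φ`-moments, because each superlevel set
`{Φ(|h|) > t}` with `t > 0` is empty or of the form `{|h| > v}` with `v > 0`. -/
lemma lintegral_le_of_distribution_le {X Y : Type*} [MeasurableSpace X] [MeasurableSpace Y]
    (μ : Measure X) (ν : Measure Y) (Φ : ℝ → ℝ) (hΦmono : MonotoneOn Φ (Ici (0:ℝ)))
    (hΦ0 : Φ 0 = 0) (hc : Continuous (fun x : ℝ => Φ |x|)) (h : X → ℝ) (k : Y → ℝ)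
    (hh : Measurable h) (hk : Measurable k)
    (hd : ∀ v > (0:ℝ), μ {x | v < |h x|} ≤ ν {y | v < |k y|}) :
    ∫⁻ x, ENNReal.ofReal (Φ |h x|) ∂μ ≤ ∫⁻ y, ENNReal.ofReal (Φ |k y|) ∂ν := by
  have hnn : ∀ x : ℝ, 0 ≤ Φ |x| := fun x => by
    rw [← hΦ0]; exact hΦmono self_mem_Ici (abs_nonneg x) (abs_nonneg x)
  rw [lintegral_eq_lintegral_meas_lt μ (Filter.Eventually.of_forall fun x => hnn (h x))
      (hc.measurable.comp hh).aemeasurable,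
    lintegral_eq_lintegral_meas_lt ν (Filter.Eventually.of_forall fun x => hnn (k x))
      (hc.measurable.comp hk).aemeasurable]
  refine setLIntegral_mono' measurableSet_Ioi fun t ht => ?_
  have ht : 0 < t := ht
  by_cases hex : ∃ x : ℝ, t < Φ |x|
  · obtain ⟨x₀, hx₀⟩ := hex
    set A : Set ℝ := {v | Φ |v| ≤ t} with hA
    have hAc : IsClosed A := isClosed_le hc continuous_const
    have hAb : BddAbove A := by
      refine ⟨|x₀|, fun v hv => ?_⟩
      by_contra! hlt
      have := hΦmono (abs_nonneg x₀) (abs_nonneg v) (hlt.le.trans (le_abs_self v))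
      have hv : Φ |v| ≤ t := hv
      linarith
    have h0 : (0:ℝ) ∈ A := by simp [hA, hΦ0, ht.le]
    have hmem : sSup A ∈ A := hAc.csSup_mem ⟨0, h0⟩ hAb
    -- continuity at `0` makes the threshold `sSup A` positive
    have hpos : 0 < sSup A := by
      obtain ⟨ε, hε, hball⟩ := Metric.continuousAt_iff.1 (hc.continuousAt (x := 0)) t ht
      have : Φ |ε / 2| < t := by
        have := hball (x := ε / 2) (by
          rw [Real.dist_eq, sub_zero, abs_of_pos (by positivity)]; linarith)
        simp only [Real.dist_eq, abs_zero, hΦ0, sub_zero] at this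
        exact (le_abs_self _).trans_lt this
      exact (half_pos hε).trans_le (le_csSup hAb this.le)
    have key : ∀ x : ℝ, t < Φ |x| ↔ sSup A < |x| := by
      intro x
      constructor
      · intro hx
        by_contra! hle
        have := hΦmono (abs_nonneg x) (mem_Ici.2 (abs_nonneg (sSup A)))
          (hle.trans (le_abs_self _))
        have hm : Φ |sSup A| ≤ t := hmem
        linarith
      · intro hx
        by_contra! hle
        have : |x| ∈ A := by simpa [hA] using hle
        exact absurd (le_csSup hAb this) (not_le.2 hx)
    simp only [key]
    exact hd _ hpos
  · push Not at hex
    have : {x | t < Φ |h x|} = ∅ := by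
      ext x; simpa using hex (h x)
    rw [this]; simp

/-- The change of variables `t = (u/a)^{-r}`, as an inequality. -/
lemma lintegral_rpow_subst_le (Φ : ℝ → ℝ) (r a : ℝ) (hr : 0 < r) (ha : 0 < a) (S T : Set ℝ)
    (hS : MeasurableSet S) (hS0 : S ⊆ Ioi 0) (hT : ∀ t ∈ T, 0 < t ∧ a * t ^ (-(1/r)) ∈ S) :
    ∫⁻ t in T, ENNReal.ofReal (Φ (a * t ^ (-(1/r))))
      ≤ ENNReal.ofReal (r * a ^ r) * ∫⁻ u in S, ENNReal.ofReal (u ^ (-r) * Φ u / u) := by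
  have hTS : T ⊆ (fun u : ℝ => (u / a) ^ (-r)) '' S := by
    intro t ht
    obtain ⟨h0, hm⟩ := hT t ht
    refine ⟨_, hm, ?_⟩
    simp only
    rw [mul_div_cancel_left₀ _ ha.ne', ← Real.rpow_mul h0.le]
    have : -(1 / r) * -r = 1 := by field_simp
    rw [this, Real.rpow_one]
  -- `t ↦ a t^{-1/r}` inverts the substitution on `(0,∞)`
  have hinv : ∀ u ∈ S, a * ((u / a) ^ (-r)) ^ (-(1/r)) = u := by
    intro u hu
    have hu0 : 0 < u := hS0 hu
    rw [← Real.rpow_mul (by positivity)]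
    have : -r * -(1 / r) = 1 := by field_simp
    rw [this, Real.rpow_one]
    field_simp
  refine (lintegral_mono_set hTS).trans ?_
  rw [lintegral_image_eq_lintegral_abs_deriv_mul hS
    (f' := fun u => 1 / a * (-r) * (u / a) ^ (-r - 1))
    (fun u hu => ?_) (fun u hu w hw huw => ?_)]
  · rw [← lintegral_const_mul' _ _ ENNReal.ofReal_ne_top]
    refine le_of_eq (setLIntegral_congr_fun hS fun u hu => ?_)
    have hu0 : 0 < u := hS0 hu
    rw [hinv u hu, ← ENNReal.ofReal_mul (abs_nonneg _), ← ENNReal.ofReal_mul (by positivity)]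
    congr 1
    have h1 : |1 / a * (-r) * (u / a) ^ (-r - 1)| = 1 / a * r * (u / a) ^ (-r - 1) := by
      rw [abs_mul, abs_mul, abs_neg, abs_of_pos hr, abs_of_pos (by positivity : 0 < 1 / a),
        abs_of_pos (by positivity)]
    rw [h1, Real.rpow_sub_one (by positivity), Real.div_rpow hu0.le ha.le,
      Real.rpow_neg ha.le]
    field_simp
  · have hu0 : 0 < u := hS0 hu
    exact (((hasDerivAt_id u).div_const a).rpow_const
      (Or.inl (by simp only [id]; positivity))).hasDerivWithinAt
  · rw [← hinv u hu, ← hinv w hw]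
    rw [huw]

/-- The inner integral: the part of `θ` on `(0,1)` is controlled by the condition at `∞` and the
part on `[1,∞)` by the condition at `0`. -/
lemma lintegral_theta_le (p q : ℝ) (hp : 0 < p) (hq : 0 < q)
    (Φ : ℝ → ℝ) (hΦ0 : Φ 0 = 0)
    (C₂ : ℝ) (hC₂ : ∀ t > (0:ℝ),
      (∫⁻ s in Ioo (0:ℝ) t, ENNReal.ofReal (s ^ (-p) * Φ s / s) ∂volume)
        ≤ ENNReal.ofReal (C₂ * (t ^ (-p) * Φ t)))
    (C₃ : ℝ) (hC₃ : ∀ t > (0:ℝ),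
      (∫⁻ s in Ioi t, ENNReal.ofReal (s ^ (-q) * Φ s / s) ∂volume)
        ≤ ENNReal.ofReal (C₃ * (t ^ (-q) * Φ t)))
    (hnn : ∀ t ≥ 0, 0 ≤ Φ t) (a : ℝ) (ha : 0 ≤ a) :
    ∫⁻ t, ENNReal.ofReal (Φ |a * thetaPQ p q t|) ∂lebR
      ≤ ENNReal.ofReal (q * |C₃| + p * |C₂|) * ENNReal.ofReal (Φ a) := by
  rcases ha.eq_or_lt with rfl | ha
  · simp [hΦ0]
  have hconst : ∀ r C : ℝ, 0 < r → ENNReal.ofReal (r * a ^ r) *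
      ENNReal.ofReal (C * (a ^ (-r) * Φ a)) ≤ ENNReal.ofReal (r * |C| * Φ a) := by
    intro r C hr
    rw [← ENNReal.ofReal_mul (by positivity)]
    refine ENNReal.ofReal_le_ofReal ?_
    have e : r * a ^ r * (C * (a ^ (-r) * Φ a)) = r * C * Φ a := by
      rw [Real.rpow_neg ha.le]
      have : a ^ r ≠ 0 := by positivity
      field_simp
    rw [e]
    have := hnn a ha.le
    have := le_abs_self C
    gcongr
  have hsplit : Ioi (0:ℝ) = Ioo 0 1 ∪ Ici 1 := (Ioo_union_Ici_eq_Ioi one_pos).symm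
  have h1 : ∫⁻ t in Ioo (0:ℝ) 1, ENNReal.ofReal (Φ |a * thetaPQ p q t|)
      ≤ ENNReal.ofReal (q * |C₃| * Φ a) := by
    calc _ = ∫⁻ t in Ioo (0:ℝ) 1, ENNReal.ofReal (Φ (a * t ^ (-(1/q)))) := by
          refine setLIntegral_congr_fun measurableSet_Ioo fun t ht => ?_
          have h0 := ht.1
          have hth : thetaPQ p q t = t ^ (-(1/q)) := by
            have : t ∉ Ici (1:ℝ) := by simpa using ht.2
            simp [thetaPQ, indicator_of_mem ht, indicator_of_notMem this]
          simp only [hth]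
          rw [abs_of_nonneg (by positivity)]
      _ ≤ _ := lintegral_rpow_subst_le Φ q a hq ha (Ioi a) _ measurableSet_Ioi
          (Ioi_subset_Ioi ha.le) fun t ht => ⟨ht.1, by
            have : 1 < t ^ (-(1/q)) := Real.one_lt_rpow_of_pos_of_lt_one_of_neg ht.1 ht.2
              (by simpa using hq)
            exact lt_mul_of_one_lt_right ha this⟩
      _ ≤ _ := by gcongr; exact hC₃ a ha
      _ ≤ _ := hconst q C₃ hq
  have h2 : ∫⁻ t in Ici (1:ℝ), ENNReal.ofReal (Φ |a * thetaPQ p q t|)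
      ≤ ENNReal.ofReal (p * |C₂| * Φ a) := by
    rw [← restrict_Ioi_eq_restrict_Ici]
    calc _ = ∫⁻ t in Ioi (1:ℝ), ENNReal.ofReal (Φ (a * t ^ (-(1/p)))) := by
          refine setLIntegral_congr_fun measurableSet_Ioi fun t ht => ?_
          have h1 : (1:ℝ) < t := ht
          have h0 : 0 < t := one_pos.trans h1
          have hth : thetaPQ p q t = t ^ (-(1/p)) := by
            have : t ∉ Ioo (0:ℝ) 1 := fun h => absurd h.2 (not_lt.2 h1.le)
            simp [thetaPQ, indicator_of_notMem this,
              indicator_of_mem (show t ∈ Ici (1:ℝ) from h1.le)]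
          simp only [hth]
          rw [abs_of_nonneg (by positivity)]
      _ ≤ _ := lintegral_rpow_subst_le Φ p a hp ha (Ioo 0 a) _ measurableSet_Ioo
          (fun t ht => ht.1) fun t ht => by
            have h1 : (1:ℝ) < t := ht
            have h0 : 0 < t := one_pos.trans h1
            have : t ^ (-(1/p)) < 1 := Real.rpow_lt_one_of_one_lt_of_neg h1 (by simpa using hp)
            exact ⟨h0, by positivity, mul_lt_of_lt_one_right ha this⟩
      _ ≤ _ := by gcongr; exact hC₂ a ha
      _ ≤ _ := hconst p C₂ hp
  rw [lebR, hsplit]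
  refine (lintegral_union_le _ _ _).trans ((add_le_add h1 h2).trans (le_of_eq ?_))
  have := hnn a ha.le
  rw [← ENNReal.ofReal_add (by positivity) (by positivity), ← ENNReal.ofReal_mul (by positivity),
    add_mul]

/-- Iterated `Δ₂`-condition: dilation by an arbitrary factor costs a constant. -/
lemma exists_dilation_const (Φ : ℝ → ℝ) (hΦmono : MonotoneOn Φ (Ici (0:ℝ)))
    (hnn : ∀ t ≥ 0, 0 ≤ Φ t) (C₁ : ℝ) (hΔ₂ : ∀ t ≥ (0:ℝ), Φ (2 * t) ≤ C₁ * Φ t)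
    (α : ℝ) (hα : 0 < α) : ∃ c : ℝ, 0 ≤ c ∧ ∀ t ≥ (0:ℝ), Φ (α * t) ≤ c * Φ t := by
  have hiter : ∀ n : ℕ, ∀ t ≥ (0:ℝ), Φ (2 ^ n * t) ≤ |C₁| ^ n * Φ t := by
    intro n
    induction n with
    | zero => simp
    | succ n ih =>
      intro t ht
      calc Φ (2 ^ (n + 1) * t) = Φ (2 * (2 ^ n * t)) := by ring_nf
        _ ≤ C₁ * Φ (2 ^ n * t) := hΔ₂ _ (by positivity)
        _ ≤ |C₁| * Φ (2 ^ n * t) :=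
          mul_le_mul_of_nonneg_right (le_abs_self _) (hnn _ (by positivity))
        _ ≤ |C₁| * (|C₁| ^ n * Φ t) := mul_le_mul_of_nonneg_left (ih t ht) (abs_nonneg _)
        _ = _ := by ring
  obtain ⟨n, hn⟩ := pow_unbounded_of_one_lt α one_lt_two
  refine ⟨|C₁| ^ n, by positivity, fun t ht => le_trans ?_ (hiter n t ht)⟩
  have ht : 0 ≤ t := ht
  exact hΦmono (mem_Ici.2 (by positivity)) (mem_Ici.2 (by positivity)) (by gcongr)

/-- Φ-moment version of the key distribution inequality, finite exponents.
If `Φ` is increasing, differentiable, vanishes at `0`, satisfies the global Δ₂-condition,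
`sup_{t>0} tΦ′(t)/Φ(t) < ∞`, and the Matuszewska–Orlicz conditions
`∫_0^t s^{−p}Φ(s) ds/s ≤ C₂ t^{−p}Φ(t)` and `∫_t^∞ s^{−q}Φ(s) ds/s ≤ C₃ t^{−q}Φ(t)`,
then there is `K > 0`, depending only on `p, q, α` and the data of `Φ`, such that
whenever `d(αv; g) ≤ d(v; Θ_{p,q}(f))` for all `v > 0` (with `f ≥ 0`), one has
`∫_0^∞ Φ(|g(t)|) dt ≤ K ∫_0^∞ Φ(f(t)) dt`. -/
theorem stmt7 (p q : ℝ) (hp : 0 < p) (hpq : p < q)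
    (Φ Φ' : ℝ → ℝ) (hΦmono : MonotoneOn Φ (Ici (0:ℝ))) (hΦ0 : Φ 0 = 0)
    (hΦderiv : ∀ t > (0:ℝ), HasDerivAt Φ (Φ' t) t)
    (C₁ : ℝ) (hΔ₂ : ∀ t ≥ (0:ℝ), Φ (2 * t) ≤ C₁ * Φ t)
    (M : ℝ) (hM : ∀ t > (0:ℝ), t * Φ' t ≤ M * Φ t)
    (C₂ : ℝ) (hC₂ : ∀ t > (0:ℝ),
      (∫⁻ s in Ioo (0:ℝ) t, ENNReal.ofReal (s ^ (-p) * Φ s / s) ∂volume)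
        ≤ ENNReal.ofReal (C₂ * (t ^ (-p) * Φ t)))
    (C₃ : ℝ) (hC₃ : ∀ t > (0:ℝ),
      (∫⁻ s in Ioi t, ENNReal.ofReal (s ^ (-q) * Φ s / s) ∂volume)
        ≤ ENNReal.ofReal (C₃ * (t ^ (-q) * Φ t)))
    (α : ℝ) (hα : 0 < α) :
    ∃ K > (0:ℝ), ∀ f g : ℝ → ℝ, Measurable f → 0 ≤ f → Measurable g →
      (∀ v > (0:ℝ),
        lebR {t | α * v < |g t|} ≤ lebR2 {st : ℝ × ℝ | v < |f st.1 * thetaPQ p q st.2|}) →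
      ∫⁻ t, ENNReal.ofReal (Φ |g t|) ∂lebR
        ≤ ENNReal.ofReal K * ∫⁻ t, ENNReal.ofReal (Φ (f t)) ∂lebR := by
  have hq : 0 < q := hp.trans hpq
  have hnn : ∀ t ≥ 0, 0 ≤ Φ t := fun t ht => by
    rw [← hΦ0]; exact hΦmono self_mem_Ici ht ht
  have hc := continuous_comp_abs p hp Φ Φ' hΦmono hΦ0 hΦderiv
    ((hC₂ 1 one_pos).trans_lt ENNReal.ofReal_lt_top).ne
  obtain ⟨c, hc0, hdil⟩ := exists_dilation_const Φ hΦmono hnn C₁ hΔ₂ α hα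
  set B : ℝ := q * |C₃| + p * |C₂| with hB
  have hB0 : 0 ≤ B := by positivity
  -- the summand `1` only serves to make the constant strictly positive
  refine ⟨c * B + 1, by positivity, fun f g hf hf0 hg hd => ?_⟩
  have hθ := measurable_thetaPQ p q
  have hk : Measurable (fun st : ℝ × ℝ => f st.1 * thetaPQ p q st.2) :=
    (hf.comp measurable_fst).mul (hθ.comp measurable_snd)
  have : SFinite lebR := by unfold lebR; infer_instance
  calc ∫⁻ t, ENNReal.ofReal (Φ |g t|) ∂lebR
      ≤ ∫⁻ t, ENNReal.ofReal c * ENNReal.ofReal (Φ |g t / α|) ∂lebR := by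
        refine lintegral_mono fun t => ?_
        simp only
        rw [← ENNReal.ofReal_mul hc0]
        refine ENNReal.ofReal_le_ofReal ?_
        have h := hdil |g t / α| (abs_nonneg _)
        rw [abs_div, abs_of_pos hα, mul_div_cancel₀ _ hα.ne'] at h
        rwa [abs_div, abs_of_pos hα]
    _ = ENNReal.ofReal c * ∫⁻ t, ENNReal.ofReal (Φ |g t / α|) ∂lebR :=
        lintegral_const_mul' _ _ ENNReal.ofReal_ne_top
    _ ≤ ENNReal.ofReal c *
        ∫⁻ st, ENNReal.ofReal (Φ |f st.1 * thetaPQ p q st.2|) ∂lebR2 := by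
        gcongr
        refine lintegral_le_of_distribution_le lebR lebR2 Φ hΦmono hΦ0 hc (fun t => g t / α)
          (fun st => f st.1 * thetaPQ p q st.2) (hg.div_const α) hk fun v hv => ?_
        refine le_trans (le_of_eq ?_) (hd v hv)
        congr 1
        ext t
        simp only [mem_ofPred_eq, abs_div, abs_of_pos hα]
        rw [lt_div_iff₀ hα, mul_comm]
    _ = ENNReal.ofReal c *
        ∫⁻ s, ∫⁻ t, ENNReal.ofReal (Φ |f s * thetaPQ p q t|) ∂lebR ∂lebR := by
        have hm : Measurable fun st : ℝ × ℝ =>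
            ENNReal.ofReal (Φ |f st.1 * thetaPQ p q st.2|) :=
          (hc.measurable.comp hk).ennreal_ofReal
        rw [lebR2, lintegral_prod _ hm.aemeasurable]
    _ ≤ ENNReal.ofReal c * ∫⁻ s, ENNReal.ofReal B * ENNReal.ofReal (Φ (f s)) ∂lebR := by
        gcongr with s
        exact lintegral_theta_le p q hp hq Φ hΦ0 C₂ hC₂ C₃ hC₃ hnn (f s) (hf0 s)
    _ = ENNReal.ofReal (c * B) * ∫⁻ s, ENNReal.ofReal (Φ (f s)) ∂lebR := by
        rw [lintegral_const_mul' _ _ ENNReal.ofReal_ne_top, ENNReal.ofReal_mul hc0, mul_assoc]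
    _ ≤ _ := by gcongr; linarith
end
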